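/- Let S = (X, (φ_j)_{j∈ℕ}, (q_j)_{j∈ℕ}) be a γ-uniformly contractive mpCIFS on a nonempty compact metric space X, and let τ ∈ (γ,1). Then the countable Markov operator M(μ)(f) = sup_{j∈ℕ} ( q_j + μ(f ∘ φ_j) ) satisfies d̃_{γ,τ}( M(μ), M(ν) ) ≤ (γ/τ) · d̃_{γ,τ}(μ, ν) for all idempotent probabilities μ, ν on X; in particular M is a Banach contraction with respect to the metric d̃_{γ,τ}. -/

import Mathlib

def IsIdempotentProb {X : Type*} [TopologicalSpace X] (μ : C(X, ℝ) → ℝ) : Prop :=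
  (∀ (c : ℝ) (f : C(X, ℝ)), μ (ContinuousMap.const X c + f) = c + μ f) ∧
  (∀ f g : C(X, ℝ), μ (f ⊔ g) = max (μ f) (μ g)) ∧
  μ 0 = 0

/-- The pseudometric `d_a` on idempotent probabilities. -/
noncomputable def dLip {X : Type*} [MetricSpace X] (a : ℝ) (μ ν : C(X, ℝ) → ℝ) : ℝ :=
  sSup { r : ℝ | ∃ g : C(X, ℝ), LipschitzWith (Real.toNNReal a) g ∧ r = |μ g - ν g| }

/-- The metric `d̃_{β,τ}` on idempotent probabilities. -/
noncomputable def dtilde {X : Type*} [MetricSpace X] (β τ : ℝ) (μ ν : C(X, ℝ) → ℝ) : ℝ :=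
  ∑' i : ℤ, (τ ^ i.natAbs / β ^ i) * dLip (β ^ i) μ ν

/-!
Composing an `a`-Lipschitz `g` with a `γ`-Lipschitz `φ_j` gives an `aγ`-Lipschitz function, so
`d_a(M μ, M ν) ≤ d_{aγ}(μ, ν)`. At `a = γ ^ i` this bounds each term of the two-sided series for
`d̃_{γ,τ}(M μ, M ν)` by the next term of the series for `d̃_{γ,τ}(μ, ν)`, up to a ratio of weights
that is at most `γ / τ` because `|i + 1| ≤ |i| + 1`. The series converge since
`d_a(μ, ν) ≤ a · diam X`, which bounds the `i`-th term by `τ ^ |i| · diam X`.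
-/

/-- The functional `μ` is a mean in Cauchy's sense: `inf f ≤ μ f ≤ sup f`. This is the common
setting of idempotent probabilities and integration against ordinary probability measures. The
inequalities are quantified over all constant bounds of `f`, so that they say nothing about an
infimum or supremum that does not exist. -/
structure IsMean {X : Type*} [TopologicalSpace X] (μ : C(X, ℝ) → ℝ) : Prop where
  le_of_forall_le : ∀ {f : C(X, ℝ)} {c : ℝ}, (∀ x, f x ≤ c) → μ f ≤ c
  le_of_forall_ge : ∀ {f : C(X, ℝ)} {c : ℝ}, (∀ x, c ≤ f x) → c ≤ μ f

/-- The max-plus Markov operator of the maps `ψ j` with weights `q j`, for an arbitrary index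
type. It takes the junk value `0` where the supremum is not bounded above. -/
noncomputable def markovOperator {ι X : Type*} [TopologicalSpace X] (q : ι → ℝ) (ψ : ι → C(X, X))
    (μ : C(X, ℝ) → ℝ) : C(X, ℝ) → ℝ :=
  fun f => ⨆ j, (q j + μ (f.comp (ψ j)))

namespace IsIdempotentProb

variable {X : Type*} [TopologicalSpace X] {μ : C(X, ℝ) → ℝ}

theorem monotone (hμ : IsIdempotentProb μ) : Monotone μ := fun f g hfg => by
  rw [← sup_eq_right.mpr hfg, hμ.2.1]
  exact le_max_left _ _

theorem map_const (hμ : IsIdempotentProb μ) (c : ℝ) : μ (ContinuousMap.const X c) = c := by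
  simpa only [add_zero, hμ.2.2] using hμ.1 c 0

theorem isMean (hμ : IsIdempotentProb μ) : IsMean μ where
  le_of_forall_le {_ c} hf := (hμ.monotone hf).trans_eq (hμ.map_const c)
  le_of_forall_ge {_ c} hf := (hμ.map_const c).symm.trans_le (hμ.monotone hf)

end IsIdempotentProb

section Suprema

variable {ι : Type*} [Nonempty ι] {u v : ι → ℝ} {C : ℝ}

theorem ciSup_le_ciSup_add (hv : BddAbove (Set.range v)) (h : ∀ j, u j ≤ v j + C) :
    ⨆ j, u j ≤ (⨆ j, v j) + C :=
  ciSup_le fun j => (h j).trans (add_le_add_left (le_ciSup hv j) C)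

theorem abs_ciSup_sub_ciSup_le (hu : BddAbove (Set.range u)) (hv : BddAbove (Set.range v))
    (h : ∀ j, |u j - v j| ≤ C) : |(⨆ j, u j) - ⨆ j, v j| ≤ C := by
  have huv : ⨆ j, u j ≤ (⨆ j, v j) + C :=
    ciSup_le_ciSup_add hv fun j => by linarith [(abs_le.mp (h j)).2]
  have hvu : ⨆ j, v j ≤ (⨆ j, u j) + C :=
    ciSup_le_ciSup_add hu fun j => by linarith [(abs_le.mp (h j)).1]
  exact abs_le.mpr ⟨by linarith, by linarith⟩

end Suprema

section Weights

variable {β τ : ℝ}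

theorem summable_pow_natAbs (hτ0 : 0 ≤ τ) (hτ1 : τ < 1) :
    Summable fun i : ℤ => τ ^ i.natAbs := by
  have hgeom : Summable fun n : ℕ => τ ^ n := summable_geometric_of_lt_one hτ0 hτ1
  exact .of_nat_of_neg (by simpa using hgeom) (by simpa using hgeom)

theorem pow_natAbs_div_zpow_le (hβ : 0 < β) (hτ0 : 0 < τ) (hτ1 : τ ≤ 1) (i : ℤ) :
    τ ^ i.natAbs / β ^ i ≤ β / τ * (τ ^ (i + 1).natAbs / β ^ (i + 1)) := by
  have hpow : τ ^ i.natAbs * τ ≤ τ ^ (i + 1).natAbs := by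
    rw [← pow_succ]
    exact pow_le_pow_of_le_one hτ0.le hτ1 (by omega)
  calc τ ^ i.natAbs / β ^ i
      ≤ τ ^ (i + 1).natAbs / τ / β ^ i := by gcongr; exact (le_div_iff₀ hτ0).mpr hpow
    _ = β / τ * (τ ^ (i + 1).natAbs / β ^ (i + 1)) := by
      rw [zpow_add_one₀ hβ.ne']
      field_simp

end Weights

section LipschitzDistance

variable {X : Type*} [MetricSpace X] {μ ν : C(X, ℝ) → ℝ} {a : ℝ}

theorem dLip_nonneg (a : ℝ) (μ ν : C(X, ℝ) → ℝ) : 0 ≤ dLip a μ ν :=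
  Real.sSup_nonneg <| by
    rintro _ ⟨g, -, rfl⟩
    exact abs_nonneg _

theorem dLip_le {C : ℝ}
    (h : ∀ g : C(X, ℝ), LipschitzWith a.toNNReal g → |μ g - ν g| ≤ C) : dLip a μ ν ≤ C := by
  refine csSup_le ⟨_, 0, LipschitzWith.const' (0 : ℝ), rfl⟩ ?_
  rintro _ ⟨g, hg, rfl⟩
  exact h g hg

namespace IsMean

variable [BoundedSpace X]

theorem sub_le_mul_diam (hμ : IsMean μ) (hν : IsMean ν) (ha : 0 ≤ a) {g : C(X, ℝ)}
    (hg : LipschitzWith a.toNNReal g) : μ g - ν g ≤ a * Metric.diam (Set.univ : Set X) := by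
  have hosc : ∀ x y, g x ≤ g y + a * Metric.diam (Set.univ : Set X) := fun x y =>
    calc g x ≤ g y + a * dist x y := by
          simpa only [Real.coe_toNNReal a ha] using hg.le_add_mul x y
      _ ≤ g y + a * Metric.diam (Set.univ : Set X) := by
          gcongr
          exact Metric.dist_le_diam_of_mem (Bornology.IsBounded.all _) trivial trivial
  have hle : μ g - a * Metric.diam (Set.univ : Set X) ≤ ν g :=
    hν.le_of_forall_ge fun y => sub_le_iff_le_add.mpr <| hμ.le_of_forall_le fun x => hosc x y
  linarith

theorem abs_sub_le_mul_diam (hμ : IsMean μ) (hν : IsMean ν) (ha : 0 ≤ a) {g : C(X, ℝ)}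
    (hg : LipschitzWith a.toNNReal g) : |μ g - ν g| ≤ a * Metric.diam (Set.univ : Set X) :=
  abs_sub_le_iff.mpr ⟨hμ.sub_le_mul_diam hν ha hg, hν.sub_le_mul_diam hμ ha hg⟩

theorem abs_sub_le_dLip (hμ : IsMean μ) (hν : IsMean ν) (ha : 0 ≤ a) {g : C(X, ℝ)}
    (hg : LipschitzWith a.toNNReal g) : |μ g - ν g| ≤ dLip a μ ν := by
  refine le_csSup ⟨a * Metric.diam (Set.univ : Set X), ?_⟩ ⟨g, hg, rfl⟩
  rintro _ ⟨f, hf, rfl⟩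
  exact hμ.abs_sub_le_mul_diam hν ha hf

theorem summable_dtilde (hμ : IsMean μ) (hν : IsMean ν) {β τ : ℝ} (hβ : 0 < β) (hτ0 : 0 ≤ τ)
    (hτ1 : τ < 1) : Summable fun i : ℤ => τ ^ i.natAbs / β ^ i * dLip (β ^ i) μ ν := by
  refine .of_nonneg_of_le (fun i => mul_nonneg (by positivity) (dLip_nonneg _ _ _)) (fun i => ?_)
    ((summable_pow_natAbs hτ0 hτ1).mul_right (Metric.diam (Set.univ : Set X)))
  calc τ ^ i.natAbs / β ^ i * dLip (β ^ i) μ ν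
      ≤ τ ^ i.natAbs / β ^ i * (β ^ i * Metric.diam (Set.univ : Set X)) := by
        gcongr
        exact dLip_le fun g hg => hμ.abs_sub_le_mul_diam hν (by positivity) hg
    _ = τ ^ i.natAbs * Metric.diam (Set.univ : Set X) := by field_simp

end IsMean

theorem dtilde_le_of_dLip_le {β τ : ℝ} (hβ : 0 < β) (hτ0 : 0 < τ) (hτ1 : τ ≤ 1)
    {μ' ν' : C(X, ℝ) → ℝ}
    (hsum : Summable fun i : ℤ => τ ^ i.natAbs / β ^ i * dLip (β ^ i) μ ν)
    (hle : ∀ i : ℤ, dLip (β ^ i) μ' ν' ≤ dLip (β ^ (i + 1)) μ ν) :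
    dtilde β τ μ' ν' ≤ β / τ * dtilde β τ μ ν := by
  let term (i : ℤ) : ℝ := τ ^ i.natAbs / β ^ i * dLip (β ^ i) μ ν
  have hterm : ∀ i : ℤ,
      τ ^ i.natAbs / β ^ i * dLip (β ^ i) μ' ν' ≤ β / τ * term (i + 1) := fun i =>
    calc τ ^ i.natAbs / β ^ i * dLip (β ^ i) μ' ν'
        ≤ β / τ * (τ ^ (i + 1).natAbs / β ^ (i + 1)) * dLip (β ^ (i + 1)) μ ν :=
          mul_le_mul (pow_natAbs_div_zpow_le hβ hτ0 hτ1 i) (hle i) (dLip_nonneg _ _ _)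
            (by positivity)
      _ = β / τ * term (i + 1) := mul_assoc _ _ _
  have hshift : Summable fun i : ℤ => β / τ * term (i + 1) :=
    ((Equiv.addRight (1 : ℤ)).summable_iff.mpr hsum).mul_left (β / τ)
  calc dtilde β τ μ' ν'
      ≤ ∑' i : ℤ, β / τ * term (i + 1) :=
        (Summable.of_nonneg_of_le (fun i => mul_nonneg (by positivity) (dLip_nonneg _ _ _))
          hterm hshift).tsum_le_tsum hterm hshift
    _ = β / τ * ∑' i : ℤ, term (i + 1) := tsum_mul_left
    _ = β / τ * dtilde β τ μ ν := congrArg (β / τ * ·) ((Equiv.addRight (1 : ℤ)).tsum_eq term)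

end LipschitzDistance

section Markov

theorem IsMean.bddAbove_range_weight_add {ι X : Type*} [TopologicalSpace X] {μ : C(X, ℝ) → ℝ}
    (hμ : IsMean μ) {q : ι → ℝ} (hq : BddAbove (Set.range q)) {g : C(X, ℝ)}
    (hg : BddAbove (Set.range g)) (ψ : ι → C(X, X)) :
    BddAbove (Set.range fun j => q j + μ (g.comp (ψ j))) := by
  obtain ⟨Q, hQ⟩ := hq
  obtain ⟨C, hC⟩ := hg
  refine ⟨Q + C, ?_⟩
  rintro _ ⟨j, rfl⟩
  exact add_le_add (hQ ⟨j, rfl⟩) (hμ.le_of_forall_le fun x => hC ⟨ψ j x, rfl⟩)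

variable {ι X : Type*} [Nonempty ι] [MetricSpace X] [BoundedSpace X]
  {q : ι → ℝ} {ψ : ι → C(X, X)} {μ ν : C(X, ℝ) → ℝ}

theorem dLip_markovOperator_le {γ : ℝ} (hψ : ∀ j, LipschitzWith γ.toNNReal (ψ j))
    (hγ : 0 ≤ γ) (hq : BddAbove (Set.range q)) (hμ : IsMean μ) (hν : IsMean ν)
    {a : ℝ} (ha : 0 ≤ a) :
    dLip a (markovOperator q ψ μ) (markovOperator q ψ ν) ≤ dLip (a * γ) μ ν := by
  refine dLip_le fun g hg => ?_
  have hgb : BddAbove (Set.range g) := by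
    simpa only [Set.image_univ] using (hg.isBounded_image (.all Set.univ)).bddAbove
  have hcomp : ∀ j, |μ (g.comp (ψ j)) - ν (g.comp (ψ j))| ≤ dLip (a * γ) μ ν := fun j =>
    hμ.abs_sub_le_dLip hν (by positivity) <| (Real.toNNReal_mul ha).symm ▸ hg.comp (hψ j)
  exact abs_ciSup_sub_ciSup_le (hμ.bddAbove_range_weight_add hq hgb ψ)
    (hν.bddAbove_range_weight_add hq hgb ψ) fun j => by
      simpa only [add_sub_add_left_eq_sub] using hcomp j

theorem markov_operator_contraction_countable_general {γ τ : ℝ} (hγ : 0 < γ)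
    (hψ : ∀ j, LipschitzWith γ.toNNReal (ψ j)) (hq : BddAbove (Set.range q))
    (hτ0 : 0 < τ) (hτ1 : τ < 1) (hμ : IsMean μ) (hν : IsMean ν) :
    dtilde γ τ (markovOperator q ψ μ) (markovOperator q ψ ν) ≤ γ / τ * dtilde γ τ μ ν := by
  refine dtilde_le_of_dLip_le hγ hτ0 hτ1.le (hμ.summable_dtilde hν hγ hτ0.le hτ1) fun i => ?_
  rw [zpow_add_one₀ hγ.ne']
  exact dLip_markovOperator_le hψ hγ.le hq hμ hν (by positivity)

end Markov

theorem markov_operator_contraction_countable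
    {X : Type*} [MetricSpace X] [CompactSpace X] [Nonempty X]
    (γ : ℝ) (hγ0 : 0 < γ) (hγ1 : γ < 1)
    (φ : ℕ → X → X) (hφ : ∀ j, LipschitzWith (Real.toNNReal γ) (φ j))
    (q : ℕ → ℝ) (hq : ∀ j, q j ≤ 0) (hqsup : (⨆ j, q j) = 0)
    (τ : ℝ) (hτγ : γ < τ) (hτ1 : τ < 1)
    (μ ν : C(X, ℝ) → ℝ) (hμ : IsIdempotentProb μ) (hν : IsIdempotentProb ν) :
    dtilde γ τ
        (fun f : C(X, ℝ) => ⨆ j : ℕ, (q j + μ (f.comp ⟨φ j, (hφ j).continuous⟩)))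
        (fun f : C(X, ℝ) => ⨆ j : ℕ, (q j + ν (f.comp ⟨φ j, (hφ j).continuous⟩))) ≤
      (γ / τ) * dtilde γ τ μ ν :=
  markov_operator_contraction_countable_general (ψ := fun j => ⟨φ j, (hφ j).continuous⟩)
    hγ0 hφ ⟨0, Set.forall_mem_range.mpr hq⟩ (hγ0.trans hτγ) hτ1 hμ.isMean hν.isMean
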